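/- Let (S, 𝓕, P) be a probability space and let A : S → (p × p real matrices) be measurable, with ‖A(ω)‖ ≤ r < 1 for P-almost every ω in Frobenius norm. Then for every integer u ≥ 1 the series Σ_{v=0}^∞ E[A^v ⊗ A^{v+u}] converges in the space of p² × p² real matrices, and E[(I_p ⊗ A^u)(I_{p²} − A ⊗ A)^{−1}] = Σ_{v=0}^∞ E[A^v ⊗ A^{v+u}]. -/

import Mathlib

open MeasureTheory Kronecker Matrix

attribute [local instance] Matrix.frobeniusNormedAddCommGroup Matrix.frobeniusNormedSpace

noncomputable instance {m n : Type*} : MeasurableSpace (Matrix m n ℝ) :=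
  inferInstanceAs (MeasurableSpace (m → n → ℝ))

instance {m n : Type*} [Fintype m] [Fintype n] : BorelSpace (Matrix m n ℝ) :=
  inferInstanceAs (BorelSpace (m → n → ℝ))

/-!
By the mixed-product rule, `A ^ v ⊗ B ^ (v + u) = (1 ⊗ B ^ u) * (A ⊗ B) ^ v`, so the claim is an
instance of integrating the geometric series `Y * (1 - X)⁻¹ = ∑ Y * X ^ v` term by term in a normed
ring. The Frobenius norm is multiplicative on Kronecker products, hence `‖A ⊗ B‖ < 1` follows from
a bound on `‖A‖ * ‖B‖`, and dominated convergence applies with the majorants `‖Y‖ * r ^ v`.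
-/

section NormedRing

variable {S R : Type*} [MeasurableSpace S] {μ : Measure S}

theorem norm_mul_pow_le_norm_mul_norm_pow [SeminormedRing R] (a b : R) (n : ℕ) :
    ‖a * b ^ n‖ ≤ ‖a‖ * ‖b‖ ^ n := by
  induction n with
  | zero => simp
  | succ n ih =>
    calc ‖a * b ^ (n + 1)‖ = ‖a * b ^ n * b‖ := by rw [pow_succ, mul_assoc]
      _ ≤ ‖a * b ^ n‖ * ‖b‖ := norm_mul_le _ _
      _ ≤ ‖a‖ * ‖b‖ ^ n * ‖b‖ := by gcongr
      _ = ‖a‖ * ‖b‖ ^ (n + 1) := by rw [pow_succ, mul_assoc]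

theorem integrable_norm_pow_of_norm_le [NormedRing R] [IsFiniteMeasure μ] {X : S → R}
    (hX : AEStronglyMeasurable X μ) {C : ℝ} (hC : ∀ᵐ ω ∂μ, ‖X ω‖ ≤ C) (n : ℕ) :
    Integrable (fun ω => ‖X ω ^ n‖) μ := by
  refine Integrable.norm (.of_bound (hX.pow n) (‖(1 : R)‖ * C ^ n) ?_)
  filter_upwards [hC] with ω hω
  calc ‖X ω ^ n‖ = ‖1 * X ω ^ n‖ := by rw [one_mul]
    _ ≤ ‖(1 : R)‖ * ‖X ω‖ ^ n := norm_mul_pow_le_norm_mul_norm_pow _ _ _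
    _ ≤ ‖(1 : R)‖ * C ^ n := by gcongr

theorem hasSummableGeomSeries_of_finiteDimensional (𝕜 : Type*) [NontriviallyNormedField 𝕜]
    [CompleteSpace 𝕜] [NormedRing R] [NormedSpace 𝕜 R] [FiniteDimensional 𝕜 R] :
    HasSummableGeomSeries R :=
  have := FiniteDimensional.complete 𝕜 R
  inferInstance

theorem hasSum_integral_mul_pow [NormedRing R] [NormedSpace ℝ R] [HasSummableGeomSeries R]
    {X Y : S → R} (hX : AEStronglyMeasurable X μ) (hY : Integrable Y μ) {r : ℝ} (hr : r < 1)
    (hbound : ∀ᵐ ω ∂μ, ‖X ω‖ ≤ r) :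
    HasSum (fun v : ℕ => ∫ ω, Y ω * X ω ^ v ∂μ) (∫ ω, Y ω * Ring.inverse (1 - X ω) ∂μ) := by
  -- When `μ = 0` the bound `r` may be negative.
  have hgeom : Summable fun v : ℕ => max r 0 ^ v :=
    summable_geometric_of_lt_one (le_max_right r 0) (max_lt hr one_pos)
  refine hasSum_integral_of_dominated_convergence (fun v ω => ‖Y ω‖ * max r 0 ^ v)
    (fun v => hY.aestronglyMeasurable.mul (hX.pow v)) (fun v => ?_)
    (.of_forall fun ω => hgeom.mul_left ‖Y ω‖) ?_ ?_
  · filter_upwards [hbound] with ω hω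
    calc ‖Y ω * X ω ^ v‖ ≤ ‖Y ω‖ * ‖X ω‖ ^ v := norm_mul_pow_le_norm_mul_norm_pow _ _ _
      _ ≤ ‖Y ω‖ * max r 0 ^ v := by gcongr; exact hω.trans (le_max_left r 0)
  · simpa only [tsum_mul_left] using hY.norm.mul_const (∑' v : ℕ, max r 0 ^ v)
  · filter_upwards [hbound] with ω hω
    exact (hasSum_geom_series_inverse (X ω) (hω.trans_lt hr)).mul_left (Y ω)

end NormedRing

section Kronecker

variable {k l m n : Type*}

theorem frobenius_norm_kronecker {α : Type*} [NonUnitalNormedRing α] [NormMulClass α]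
    [Fintype k] [Fintype l] [Fintype m] [Fintype n] (B : Matrix k l α) (C : Matrix m n α) :
    ‖B ⊗ₖ C‖ = ‖B‖ * ‖C‖ := by
  simp only [frobenius_norm_def]
  rw [← Real.mul_rpow (by positivity) (by positivity)]
  simp only [Fintype.sum_prod_type, kroneckerMap_apply, norm_mul, Real.rpow_two, mul_pow,
    Finset.sum_mul_sum]

theorem continuous_kronecker {α : Type*} [TopologicalSpace α] [Mul α] [ContinuousMul α] :
    Continuous fun M : Matrix k l α × Matrix m n α => M.1 ⊗ₖ M.2 :=
  continuous_matrix fun i j =>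
    (continuous_fst.matrix_elem i.1 j.1).mul (continuous_snd.matrix_elem i.2 j.2)

variable [Fintype m] [DecidableEq m] [Fintype n] [DecidableEq n]

theorem kronecker_pow {α : Type*} [CommSemiring α] (B : Matrix m m α) (C : Matrix n n α) (v : ℕ) :
    (B ⊗ₖ C) ^ v = (B ^ v) ⊗ₖ (C ^ v) := by
  induction v with
  | zero => simp
  | succ v ih => rw [pow_succ, ih, ← mul_kronecker_mul, pow_succ, pow_succ]

theorem one_kronecker_pow_mul_kronecker_pow {α : Type*} [CommSemiring α] (B : Matrix m m α)
    (C : Matrix n n α) (u v : ℕ) :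
    (1 ⊗ₖ (C ^ u)) * (B ⊗ₖ C) ^ v = (B ^ v) ⊗ₖ (C ^ (v + u)) := by
  rw [kronecker_pow, ← mul_kronecker_mul, one_mul, ← pow_add, add_comm]

theorem integral_kronecker_shifted_general {S 𝕜 : Type*} [MeasurableSpace S] {μ : Measure S}
    [RCLike 𝕜] {A : S → Matrix m m 𝕜} {B : S → Matrix n n 𝕜} (hA : AEStronglyMeasurable A μ)
    (hB : AEStronglyMeasurable B μ) {r : ℝ} (hr : r < 1)
    (hbound : ∀ᵐ ω ∂μ, ‖A ω‖ * ‖B ω‖ ≤ r) {u : ℕ} (hBu : Integrable (fun ω => ‖B ω ^ u‖) μ) :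
    HasSum (fun v : ℕ => ∫ ω, (A ω ^ v) ⊗ₖ (B ω ^ (v + u)) ∂μ)
      (∫ ω, ((1 : Matrix m m 𝕜) ⊗ₖ (B ω ^ u)) * (1 - A ω ⊗ₖ B ω)⁻¹ ∂μ) := by
  let _ : NormedRing (Matrix (m × n) (m × n) 𝕜) := frobeniusNormedRing
  have : HasSummableGeomSeries (Matrix (m × n) (m × n) 𝕜) :=
    hasSummableGeomSeries_of_finiteDimensional 𝕜
  have hAB : AEStronglyMeasurable (fun ω => A ω ⊗ₖ B ω) μ :=
    continuous_kronecker.comp_aestronglyMeasurable (hA.prodMk hB)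
  have hone : AEStronglyMeasurable (fun ω => (1 : Matrix m m 𝕜) ⊗ₖ (B ω ^ u)) μ :=
    continuous_kronecker.comp_aestronglyMeasurable (aestronglyMeasurable_const.prodMk (hB.pow u))
  have hone_norm : Integrable (fun ω => ‖(1 : Matrix m m 𝕜) ⊗ₖ (B ω ^ u)‖) μ := by
    simpa only [frobenius_norm_kronecker] using hBu.const_mul ‖(1 : Matrix m m 𝕜)‖
  have hnorm : ∀ᵐ ω ∂μ, ‖A ω ⊗ₖ B ω‖ ≤ r := by simpa only [frobenius_norm_kronecker] using hbound
  simp only [← one_kronecker_pow_mul_kronecker_pow, nonsing_inv_eq_ringInverse]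
  exact hasSum_integral_mul_pow hAB ((integrable_norm_iff hone).1 hone_norm) hr hnorm

end Kronecker

/-- If `A : S → ℝ^{p×p}` is measurable with Frobenius norm a.e. bounded by some `r < 1`,
then for every `u ≥ 1` the series `Σ_v E[A^v ⊗ A^{v+u}]` converges and
`E[(I ⊗ A^u)(I - A ⊗ A)⁻¹] = Σ_v E[A^v ⊗ A^{v+u}]`. -/
theorem integral_kronecker_shifted {S : Type*} [MeasurableSpace S] (P : Measure S)
    [IsProbabilityMeasure P] {p : ℕ} (A : S → Matrix (Fin p) (Fin p) ℝ)
    (hA : Measurable A) (r : ℝ) (hr : r < 1) (hbound : ∀ᵐ ω ∂P, ‖A ω‖ ≤ r) :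
    ∀ u : ℕ, 1 ≤ u →
      (Summable fun v : ℕ => ∫ ω, ((A ω) ^ v) ⊗ₖ ((A ω) ^ (v + u)) ∂P) ∧
      (∫ ω, ((1 : Matrix (Fin p) (Fin p) ℝ) ⊗ₖ (A ω) ^ u) * (1 - (A ω) ⊗ₖ (A ω))⁻¹ ∂P) =
        ∑' v : ℕ, ∫ ω, ((A ω) ^ v) ⊗ₖ ((A ω) ^ (v + u)) ∂P := by
  intro u _
  have hsq : ∀ᵐ ω ∂P, ‖A ω‖ * ‖A ω‖ ≤ r := by
    filter_upwards [hbound] with ω hω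
    exact (mul_le_of_le_one_right (norm_nonneg _) (hω.trans hr.le)).trans hω
  have hA' : AEStronglyMeasurable A P :=
    Measurable.aestronglyMeasurable (β := Fin p → Fin p → ℝ) hA
  let _ : NormedRing (Matrix (Fin p) (Fin p) ℝ) := frobeniusNormedRing
  have key := integral_kronecker_shifted_general hA' hA' hr hsq
    (integrable_norm_pow_of_norm_le hA' hbound u)
  -- `1 ⊗ₖ A ω ^ u` parses as `(1 ⊗ₖ A ω) ^ u`.
  simp only [kronecker_pow, one_pow]
  exact ⟨key.summable, key.tsum_eq.symm⟩
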